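/- arXiv:2211.04506 — 2 statements merged into one kernel-verified Lean document; each statement's English description precedes it below -/
import Mathlib

section
/- Let n ≥ 4 be even. Then the max cut space of K_n has dimension at least C(n−1,2). -/
/-- Unordered pairs of distinct elements of `Fin n`, represented as ordered
pairs `(i, j)` with `i < j`; there are `n.choose 2` of them. -/
abbrev PairIdx (n : ℕ) := {p : Fin n × Fin n // p.1 < p.2}

/-- The cut indicator vector `v_S ∈ ℝ^{C(n,2)}`: the coordinate at the pair
`{i, j}` is `1` if exactly one of `i, j` lies in `S`, and `0` otherwise. -/
noncomputable def cutVec (n : ℕ) (S : Finset (Fin n)) : PairIdx n → ℝ :=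
  fun p => if (p.1.1 ∈ S ↔ p.1.2 ∈ S) then 0 else 1

/-- `S` is a maximum cut of the complete graph `K_n` (all edge weights `1`):
it maximizes `|S| * (n - |S|)`. -/
def IsMaxCut (n : ℕ) (S : Finset (Fin n)) : Prop :=
  ∀ T : Finset (Fin n), T.card * (n - T.card) ≤ S.card * (n - S.card)

/-!
Fix `2 ≤ k ≤ n - 2`; the case `k = ⌊n / 2⌋` gives maximum cuts. Modulo the `n - 1` unit vectors of
the pairs containing a vertex `z`, the cuts of size `k` span everything, so their span has dimension
at least `C(n, 2) - (n - 1) = C(n - 1, 2)`.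

To see this, work modulo the cuts of size `k` and the star at `z`, and write `E i j` for the unit
vector of the pair `{i, j}`. If `R` is a set of `k - 2` vertices avoiding `a, b, c, d`, the
alternating sum of the cuts `R ∪ {a, c}`, `R ∪ {b, d}`, `R ∪ {a, d}`, `R ∪ {b, c}` is `-2` times
`E a c + E b d - E a d - E b c`. For `a = z` this says `E b d = E b c`, so all pairs avoiding `z`
have the same class. A cut of size `k` with `z` on the other side has `k * (n - k - 1) > 0` edges
avoiding `z`, so that class is zero.
-/

/-- The symmetric product of two functions `x`, `y` on the vertices, with coordinate
`x i * y j + x j * y i` at the pair `{i, j}`. Cut vectors and unit vectors of pairs are products of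
vertex indicators, so linear relations among them follow from bilinearity. -/
def pairProduct (n : ℕ) : (Fin n → ℝ) →ₗ[ℝ] (Fin n → ℝ) →ₗ[ℝ] PairIdx n → ℝ :=
  LinearMap.mk₂ ℝ (fun x y p => x p.1.1 * y p.1.2 + x p.1.2 * y p.1.1)
    (fun _ _ _ => by ext; simp; ring) (fun _ _ _ => by ext; simp; ring)
    (fun _ _ _ => by ext; simp; ring) (fun _ _ _ => by ext; simp; ring)

/-- The unit vector of the unordered pair `{i, j}`, for `i ≠ j`; it is `0` for `i = j`. -/
def pairVec {n : ℕ} (i j : Fin n) : PairIdx n → ℝ :=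
  pairProduct n (Pi.single i 1) (Pi.single j 1)

/-- The span of the cut vectors of the vertex sets of size `k`. -/
def cutSpace (n k : ℕ) : Submodule ℝ (PairIdx n → ℝ) :=
  Submodule.span ℝ (cutVec n '' {S | S.card = k})

/-- The span of the unit vectors of the pairs containing the vertex `z`. -/
def starSpace {n : ℕ} (z : Fin n) : Submodule ℝ (PairIdx n → ℝ) :=
  Submodule.span ℝ (pairVec z '' {z}ᶜ)

section Vectors

variable {n : ℕ}

lemma pairProduct_apply (x y : Fin n → ℝ) (p : PairIdx n) :
    pairProduct n x y p = x p.1.1 * y p.1.2 + x p.1.2 * y p.1.1 := rfl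

lemma pairProduct_comm (x y : Fin n → ℝ) : pairProduct n x y = pairProduct n y x := by
  ext p
  simp only [pairProduct_apply]
  ring

lemma pairVec_comm (i j : Fin n) : pairVec i j = pairVec j i :=
  pairProduct_comm _ _

lemma pairVec_eq_single (p : PairIdx n) : pairVec p.1.1 p.1.2 = Pi.single p 1 := by
  obtain ⟨⟨i, j⟩, hij⟩ := p
  ext ⟨⟨x, y⟩, hxy⟩
  have not_swapped : ¬ (y = i ∧ x = j) := by
    rintro ⟨rfl, rfl⟩
    exact hij.not_gt hxy
  simp only [pairVec, pairProduct_apply, Pi.single_apply, Subtype.mk.injEq, Prod.mk.injEq,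
    ← ite_and, mul_ite, mul_one, mul_zero]
  grind

lemma cutVec_eq_pairProduct (S : Finset (Fin n)) :
    cutVec n S = pairProduct n (∑ i ∈ S, Pi.single i 1) (1 - ∑ i ∈ S, Pi.single i 1) := by
  have indicator_apply (v : Fin n) :
      (∑ i ∈ S, Pi.single i (1 : ℝ)) v = if v ∈ S then 1 else 0 := by
    simp [Finset.sum_apply, Pi.single_apply]
  ext p
  simp only [cutVec, pairProduct_apply, Pi.sub_apply, Pi.one_apply, indicator_apply]
  by_cases h₁ : p.1.1 ∈ S <;> by_cases h₂ : p.1.2 ∈ S <;> simp [h₁, h₂]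

lemma cutVec_eq_sum_pairVec (S : Finset (Fin n)) :
    cutVec n S = ∑ i ∈ S, ∑ j ∈ Sᶜ, pairVec i j := by
  have compl_indicator :
      (1 : Fin n → ℝ) - ∑ i ∈ S, Pi.single i 1 = ∑ i ∈ Sᶜ, Pi.single i 1 := by
    rw [sub_eq_iff_eq_add, Finset.sum_compl_add_sum]
    exact (Finset.univ_sum_single 1).symm
  rw [cutVec_eq_pairProduct, compl_indicator]
  simp only [map_sum, LinearMap.sum_apply, pairVec]
  exact Finset.sum_comm

lemma cutVec_insert {S : Finset (Fin n)} {a : Fin n} (ha : a ∉ S) :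
    cutVec n (insert a S) = cutVec n S + cutVec n {a} - (2 : ℝ) • ∑ i ∈ S, pairVec a i := by
  simp only [cutVec_eq_pairProduct, pairVec, Finset.sum_insert ha, Finset.sum_singleton,
    ← map_sum, map_add, map_sub, LinearMap.add_apply]
  rw [pairProduct_comm (∑ i ∈ S, Pi.single i 1) (Pi.single a 1)]
  module

lemma cutVec_alternating_sum {R : Finset (Fin n)} {a b c d : Fin n}
    (ha : a ∉ R) (hb : b ∉ R) (hc : c ∉ R) (hd : d ∉ R)
    (hac : a ≠ c) (had : a ≠ d) (hbc : b ≠ c) (hbd : b ≠ d) :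
    cutVec n (insert a (insert c R)) + cutVec n (insert b (insert d R))
        - cutVec n (insert a (insert d R)) - cutVec n (insert b (insert c R))
      = (-2 : ℝ) • (pairVec a c + pairVec b d - pairVec a d - pairVec b c) := by
  rw [cutVec_insert (a := a) (S := insert c R) (by simp [ha, hac]),
    cutVec_insert (a := b) (S := insert d R) (by simp [hb, hbd]),
    cutVec_insert (a := a) (S := insert d R) (by simp [ha, had]),
    cutVec_insert (a := b) (S := insert c R) (by simp [hb, hbc])]
  simp only [Finset.sum_insert hc, Finset.sum_insert hd]
  module

end Vectors

section LinearMaps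

variable {n k : ℕ} {V : Type*} [AddCommGroup V] [Module ℝ V] {f : (PairIdx n → ℝ) →ₗ[ℝ] V}

lemma eq_zero_of_map_pairVec_eq_zero (hf : ∀ i j, i ≠ j → f (pairVec i j) = 0) : f = 0 := by
  refine LinearMap.pi_ext' fun p => LinearMap.ext_ring ?_
  simpa [← pairVec_eq_single p] using hf _ _ p.2.ne

lemma map_pairVec_add_eq_of_map_cutVec_eq_zero (hk : 2 ≤ k) (hkn : k + 2 ≤ n)
    (hcut : ∀ S : Finset (Fin n), S.card = k → f (cutVec n S) = 0) {a b c d : Fin n}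
    (hac : a ≠ c) (had : a ≠ d) (hbc : b ≠ c) (hbd : b ≠ d) :
    f (pairVec a c) + f (pairVec b d) = f (pairVec a d) + f (pairVec b c) := by
  obtain ⟨R, hRsub, hRcard⟩ : ∃ R ⊆ ({a, b, c, d} : Finset (Fin n))ᶜ, R.card = k - 2 := by
    apply Finset.exists_subset_card_eq
    have : ({a, b, c, d} : Finset (Fin n)).card ≤ 4 := Finset.card_le_four
    rw [Finset.card_compl, Fintype.card_fin]
    omega
  have notMem_R : ∀ x ∈ ({a, b, c, d} : Finset (Fin n)), x ∉ R :=
    fun x hx hxR => Finset.mem_compl.mp (hRsub hxR) hx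
  have ha : a ∉ R := notMem_R a (by simp)
  have hb : b ∉ R := notMem_R b (by simp)
  have hc : c ∉ R := notMem_R c (by simp)
  have hd : d ∉ R := notMem_R d (by simp)
  have map_cut_eq_zero : ∀ {x y : Fin n}, x ∉ R → y ∉ R → x ≠ y →
      f (cutVec n (insert x (insert y R))) = 0 := by
    intro x y hx hy hxy
    apply hcut
    rw [Finset.card_insert_of_notMem (by simp [hx, hxy]), Finset.card_insert_of_notMem hy]
    omega
  have alternating := congrArg f (cutVec_alternating_sum ha hb hc hd hac had hbc hbd)
  simp only [map_sub, map_add, map_smul, map_cut_eq_zero ha hc hac, map_cut_eq_zero hb hd hbd,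
    map_cut_eq_zero ha hd had, map_cut_eq_zero hb hc hbc] at alternating
  linear_combination (norm := module) (1 / 2 : ℝ) • alternating

lemma map_pairVec_eq_map_pairVec (hk : 2 ≤ k) (hkn : k + 2 ≤ n)
    (hcut : ∀ S : Finset (Fin n), S.card = k → f (cutVec n S) = 0) {z : Fin n}
    (hstar : ∀ j, j ≠ z → f (pairVec z j) = 0) {b c d e : Fin n}
    (hb : b ≠ z) (hc : c ≠ z) (hd : d ≠ z) (he : e ≠ z) (hbc : b ≠ c) (hde : d ≠ e) :
    f (pairVec b c) = f (pairVec d e) := by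
  have change_endpoint : ∀ {x y w : Fin n}, y ≠ z → w ≠ z → x ≠ y → x ≠ w →
      f (pairVec x y) = f (pairVec x w) := by
    intro x y w hy hw hxy hxw
    simpa [hstar y hy, hstar w hw] using
      map_pairVec_add_eq_of_map_cutVec_eq_zero hk hkn hcut hw.symm hy.symm hxw hxy
  by_cases hbe : b = e
  · subst hbe
    rw [change_endpoint hc hd hbc hde.symm, pairVec_comm]
  · calc f (pairVec b c) = f (pairVec b e) := change_endpoint hc he hbc hbe
      _ = f (pairVec e b) := by rw [pairVec_comm]
      _ = f (pairVec e d) := change_endpoint hb hd (Ne.symm hbe) hde.symm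
      _ = f (pairVec d e) := by rw [pairVec_comm]

lemma map_cutVec_eq_nsmul_of_constant_off_star {z : Fin n} {l : V}
    (hstar : ∀ j, j ≠ z → f (pairVec z j) = 0)
    (hconst : ∀ i j, i ≠ z → j ≠ z → i ≠ j → f (pairVec i j) = l)
    {S : Finset (Fin n)} (hz : z ∉ S) :
    f (cutVec n S) = (S.card * (n - S.card - 1)) • l := by
  have hzc : z ∈ Sᶜ := Finset.mem_compl.mpr hz
  have degree : ∀ i ∈ S, ∑ j ∈ Sᶜ, f (pairVec i j) = (n - S.card - 1) • l := by
    intro i hi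
    have hiz : i ≠ z := ne_of_mem_of_not_mem hi hz
    rw [← Finset.add_sum_erase _ _ hzc, pairVec_comm, hstar i hiz, zero_add,
      Finset.sum_eq_card_nsmul (b := l), Finset.card_erase_of_mem hzc, Finset.card_compl,
      Fintype.card_fin]
    intro j hj
    obtain ⟨hjz, hjS⟩ := Finset.mem_erase.mp hj
    exact hconst i j hiz hjz (ne_of_mem_of_not_mem hi (Finset.mem_compl.mp hjS))
  simp only [cutVec_eq_sum_pairVec, map_sum]
  rw [Finset.sum_eq_card_nsmul degree, mul_smul]

lemma eq_zero_of_map_cutVec_eq_zero_of_map_star_eq_zero (hk : 2 ≤ k) (hkn : k + 2 ≤ n)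
    (hcut : ∀ S : Finset (Fin n), S.card = k → f (cutVec n S) = 0) {z : Fin n}
    (hstar : ∀ j, j ≠ z → f (pairVec z j) = 0) : f = 0 := by
  refine eq_zero_of_map_pairVec_eq_zero fun i j hij => ?_
  obtain rfl | hi := eq_or_ne i z
  · exact hstar j hij.symm
  obtain rfl | hj := eq_or_ne j z
  · rw [pairVec_comm]
    exact hstar i hi
  obtain ⟨S, hSsub, hS⟩ : ∃ S ⊆ ({z} : Finset (Fin n))ᶜ, S.card = k := by
    apply Finset.exists_subset_card_eq
    rw [Finset.card_compl, Fintype.card_fin, Finset.card_singleton]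
    omega
  have hz : z ∉ S := fun h => by simpa using hSsub h
  have count_smul : (k * (n - k - 1)) • f (pairVec i j) = 0 := by
    rw [← hcut S hS, map_cutVec_eq_nsmul_of_constant_off_star hstar (fun _ _ hx hy hxy =>
      map_pairVec_eq_map_pairVec hk hkn hcut hstar hx hy hi hj hxy hij) hz, hS]
  have count_ne_zero : k * (n - k - 1) ≠ 0 := Nat.mul_ne_zero (by omega) (by omega)
  rw [← Nat.cast_smul_eq_nsmul ℝ] at count_smul
  exact (smul_eq_zero.mp count_smul).resolve_left (Nat.cast_ne_zero.mpr count_ne_zero)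

end LinearMaps

section Dimension

variable {n k : ℕ}

lemma cutSpace_sup_starSpace (hk : 2 ≤ k) (hkn : k + 2 ≤ n) (z : Fin n) :
    cutSpace n k ⊔ starSpace z = ⊤ := by
  rw [← Submodule.ker_mkQ (cutSpace n k ⊔ starSpace z), LinearMap.ker_eq_top]
  refine eq_zero_of_map_cutVec_eq_zero_of_map_star_eq_zero (z := z) hk hkn
    (fun S hS => ?_) fun j hj => ?_
  · exact (Submodule.Quotient.mk_eq_zero _).mpr <|
      Submodule.mem_sup_left <| Submodule.subset_span ⟨S, hS, rfl⟩
  · exact (Submodule.Quotient.mk_eq_zero _).mpr <|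
      Submodule.mem_sup_right <| Submodule.subset_span ⟨j, hj, rfl⟩

lemma finrank_starSpace_le (z : Fin n) : Module.finrank ℝ (starSpace z) ≤ n - 1 := by
  rw [starSpace, Set.image_eq_range]
  exact (finrank_range_le_card _).trans_eq
    (by simp only [Fintype.card_compl_set, Fintype.card_fin, Set.card_singleton])

lemma card_pairIdx (n : ℕ) : Fintype.card (PairIdx n) = n.choose 2 := by
  rw [Fintype.card_subtype, Fintype.card_product_filter_lt, Fintype.card_fin]

theorem choose_two_le_finrank_cutSpace (hk : 2 ≤ k) (hkn : k + 2 ≤ n) :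
    (n - 1).choose 2 ≤ Module.finrank ℝ (cutSpace n k) := by
  let z : Fin n := ⟨0, by omega⟩
  have total : n.choose 2 ≤ Module.finrank ℝ (cutSpace n k) + Module.finrank ℝ (starSpace z) := by
    calc n.choose 2 = Module.finrank ℝ ↥(cutSpace n k ⊔ starSpace z) := by
          rw [cutSpace_sup_starSpace hk hkn, finrank_top, Module.finrank_fintype_fun_eq_card,
            card_pairIdx]
      _ ≤ _ := Submodule.finrank_add_le_finrank_add_finrank _ _
  have pascal : n.choose 2 = (n - 1) + (n - 1).choose 2 := by
    simpa using Nat.choose_eq_choose_pred_add (n := n) (k := 2) (by omega) (by omega)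
  have := finrank_starSpace_le z
  omega

end Dimension

lemma isMaxCut_of_card_eq_half {n : ℕ} {S : Finset (Fin n)} (hS : S.card = n / 2) :
    IsMaxCut n S := by
  intro T
  obtain ⟨t, ht⟩ : ∃ t, n = T.card + t :=
    Nat.exists_eq_add_of_le (by simpa using Finset.card_le_univ T)
  obtain ⟨m, hm⟩ : ∃ m, n = S.card + m :=
    Nat.exists_eq_add_of_le (by simpa using Finset.card_le_univ S)
  -- This product is `|S| * m - |T| * t`; its factors have the same sign since `|S| ≤ m ≤ |S| + 1`.
  have gap_nonneg : 0 ≤ ((T.card : ℤ) - S.card) * (T.card - m) := by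
    rcases le_or_gt T.card S.card with h | h
    · exact mul_nonneg_of_nonpos_of_nonpos (by omega) (by omega)
    · exact mul_nonneg (by omega) (by omega)
  have ht' : (t : ℤ) = S.card + m - T.card := by omega
  rw [show n - T.card = t by omega, show n - S.card = m by omega]
  zify
  rw [ht']
  linarith

theorem maxCutSpace_complete_even_lower_general (n : ℕ) (hn : 4 ≤ n) :
    (n - 1).choose 2 ≤
      Module.finrank ℝ
        ↥(Submodule.span ℝ
          {v : PairIdx n → ℝ | ∃ S : Finset (Fin n), IsMaxCut n S ∧ v = cutVec n S}) := by
  refine (choose_two_le_finrank_cutSpace (k := n / 2) (by omega) (by omega)).trans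
    (Submodule.finrank_mono (Submodule.span_mono ?_))
  rintro _ ⟨S, hS, rfl⟩
  exact ⟨S, isMaxCut_of_card_eq_half hS, rfl⟩

/-- For even `n ≥ 4`, the max cut space of `K_n` (the span of the indicator
vectors of the maximum cuts) has dimension at least `C(n-1,2)`. -/
theorem maxCutSpace_complete_even_lower (n : ℕ) (hn : 4 ≤ n) (heven : Even n) :
    (n - 1).choose 2 ≤
      Module.finrank ℝ
        ↥(Submodule.span ℝ
          {v : PairIdx n → ℝ | ∃ S : Finset (Fin n), IsMaxCut n S ∧ v = cutVec n S}) := by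
  exact maxCutSpace_complete_even_lower_general n hn
end

section
/- Let n ∈ ℕ, c ≥ 0, q ≥ 1, and let Q_1,…,Q_q ⊆ {1,…,n} be such that for every pair of distinct i, j ∈ {1,…,n}, the number of indices k ∈ {1,…,q} with exactly one of i, j in Q_k is at least c·q. Then for every nonnegative weight function w on K_n with cut function F, max_{1 ≤ k ≤ q} F(Q_k) ≥ c·Σ_{i<j} w_{ij} ≥ c·max_{S ⊆ {1,…,n}} F(S). -/
/-- The cut function of the weight function `w` on `K_n`:
`F(S) = Σ_{i ∈ S, j ∉ S} w_{ij}`. -/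
noncomputable def cutFun (n : ℕ) (w : PairIdx n → ℝ) (S : Finset (Fin n)) : ℝ :=
  ∑ e, w e * (if (e.1.1 ∈ S ↔ e.1.2 ∈ S) then 0 else 1)

open Finset

section Averaging

variable {ι α R : Type*} [CommSemiring R] {s : Finset ι} {t : Finset α} {w : α → R} {c : R}
  (r : ι → α → Prop) [∀ i a, Decidable (r i a)]

lemma mul_sum_le_sum_sum_bipartiteAbove [PartialOrder R] [IsOrderedRing R]
    (hw : ∀ a ∈ t, 0 ≤ w a) (hr : ∀ a ∈ t, c ≤ #(s.bipartiteBelow r a)) :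
    c * ∑ a ∈ t, w a ≤ ∑ i ∈ s, ∑ a ∈ t.bipartiteAbove r i, w a :=
  calc c * ∑ a ∈ t, w a = ∑ a ∈ t, c * w a := mul_sum ..
    _ ≤ ∑ a ∈ t, #(s.bipartiteBelow r a) * w a :=
      sum_le_sum fun a ha ↦ mul_le_mul_of_nonneg_right (hr a ha) (hw a ha)
    _ = ∑ a ∈ t, ∑ _i ∈ s.bipartiteBelow r a, w a := by simp only [sum_const, nsmul_eq_mul]
    _ = ∑ i ∈ s, ∑ a ∈ t.bipartiteAbove r i, w a :=
      (sum_sum_bipartiteAbove_eq_sum_sum_bipartiteBelow r fun _ a ↦ w a).symm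

lemma exists_mul_sum_le_sum_bipartiteAbove [LinearOrder R] [IsStrictOrderedRing R]
    (hs : s.Nonempty) (hw : ∀ a ∈ t, 0 ≤ w a)
    (hr : ∀ a ∈ t, c * #s ≤ #(s.bipartiteBelow r a)) :
    ∃ i ∈ s, c * ∑ a ∈ t, w a ≤ ∑ a ∈ t.bipartiteAbove r i, w a := by
  apply exists_le_of_sum_le hs
  calc ∑ _i ∈ s, c * ∑ a ∈ t, w a = c * #s * ∑ a ∈ t, w a := by
        rw [sum_const, nsmul_eq_mul]; ring
    _ ≤ ∑ i ∈ s, ∑ a ∈ t.bipartiteAbove r i, w a := mul_sum_le_sum_sum_bipartiteAbove r hw hr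

end Averaging

/-- The pair `p` crosses the cut `S`, that is, exactly one of its entries lies in `S`. It is a
condition on ordered pairs so that it applies to the edges `PairIdx n`; it does not depend on
the order of the entries. -/
abbrev Crosses {V : Type*} (S : Finset V) (p : V × V) : Prop := ¬(p.1 ∈ S ↔ p.2 ∈ S)

section CutFun

variable {n : ℕ} {w : PairIdx n → ℝ}

lemma cutFun_eq_sum_crosses (w : PairIdx n → ℝ) (S : Finset (Fin n)) :
    cutFun n w S = ∑ e with Crosses S e.1, w e := by
  simp only [cutFun, sum_filter, mul_ite, mul_zero, mul_one, ite_not]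

lemma cutFun_le_sum (hw : ∀ e, 0 ≤ w e) (S : Finset (Fin n)) : cutFun n w S ≤ ∑ e, w e := by
  rw [cutFun_eq_sum_crosses]
  exact sum_le_univ_sum_of_nonneg hw

lemma exists_mul_sum_le_cutFun {ι : Type*} {s : Finset ι} {c : ℝ} {Q : ι → Finset (Fin n)}
    (hs : s.Nonempty) (hw : ∀ e, 0 ≤ w e)
    (hQ : ∀ e : PairIdx n, c * #s ≤ #{k ∈ s | Crosses (Q k) e.1}) :
    ∃ k ∈ s, c * ∑ e, w e ≤ cutFun n w (Q k) := by
  simp only [cutFun_eq_sum_crosses]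
  exact exists_mul_sum_le_sum_bipartiteAbove (fun k (e : PairIdx n) ↦ Crosses (Q k) e.1) hs
    (fun e _ ↦ hw e) fun e _ ↦ hQ e

end CutFun

/-- If every pair of distinct vertices crosses at least a `c` fraction of the
cuts `Q₁, …, Q_q` (`q ≥ 1`, `c ≥ 0`), then for every nonnegative weight
function `w` on `K_n`, the largest of the values `F(Q_k)` is at least
`c · Σ_{i<j} w_{ij}`, which in turn is at least `c` times every cut value
(in particular `c` times the maximum cut value). -/
theorem pseudorandom_cuts_approx (n : ℕ) (c : ℝ) (hc : 0 ≤ c) (q : ℕ)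
    (hq : 1 ≤ q) (Q : Fin q → Finset (Fin n))
    (hQ : ∀ i j : Fin n, i ≠ j →
      c * q ≤ (Nat.card {k : Fin q | ¬(i ∈ Q k ↔ j ∈ Q k)} : ℝ))
    (w : PairIdx n → ℝ) (hw : ∀ e, 0 ≤ w e) :
    (∃ k : Fin q, c * ∑ e, w e ≤ cutFun n w (Q k)) ∧
    ∀ S : Finset (Fin n), c * cutFun n w S ≤ c * ∑ e, w e := by
  have hcross (e : PairIdx n) : c * #(univ : Finset (Fin q)) ≤ #{k | Crosses (Q k) e.1} := by
    rw [card_fin, ← Fintype.card_subtype, ← Nat.card_eq_fintype_card]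
    exact hQ e.1.1 e.1.2 e.2.ne
  obtain ⟨k, -, hk⟩ := exists_mul_sum_le_cutFun ⟨⟨0, hq⟩, mem_univ _⟩ hw hcross
  exact ⟨⟨k, hk⟩, fun S ↦ mul_le_mul_of_nonneg_left (cutFun_le_sum hw S) hc⟩
end
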